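/- Let K ∈ ℝ^{n×r} be entrywise positive, let a ∈ ℝ^n be entrywise positive, and let γ, τ > 0. Then the matrix Q* = diag((a / (K 1_r))^{τγ/(1+τγ)}) · K (where division and the power are entrywise) minimizes the objective F(Q) = (1/γ) · KL(Q ∥ K) + τ · KL(Q 1_r ∥ a) over all entrywise-nonnegative matrices Q ∈ ℝ^{n×r}, where KL denotes the generalized Kullback–Leibler divergence applied entrywise to matrices and coordinatewise to vectors. -/

import Mathlib

open Matrix

/-- The generalized Kullback–Leibler divergence between two matrices
(with the convention `0 · log 0 = 0`, automatic since `Real.log 0 = 0`). -/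
noncomputable def matKL {n r : ℕ} (P K : Matrix (Fin n) (Fin r) ℝ) : ℝ :=
  ∑ i, ∑ j, (P i j * Real.log (P i j / K i j) - P i j + K i j)

/-- The generalized Kullback–Leibler divergence between two vectors. -/
noncomputable def vecKL {n : ℕ} (p q : Fin n → ℝ) : ℝ :=
  ∑ i, (p i * Real.log (p i / q i) - p i + q i)

theorem kl_tangent (p k c : ℝ) (hp : 0 ≤ p) (hk : 0 < k) (hc : 0 < c) :
    p * Real.log c + k - c * k ≤ p * Real.log (p / k) - p + k := by
  rcases hp.eq_or_lt with h | h
  · subst h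
    have := mul_pos hc hk
    simp
    linarith
  · have h1 := Real.log_le_sub_one_of_pos (show 0 < c * k / p by positivity)
    have h2 : Real.log (c * k / p) = Real.log c - Real.log (p / k) := by
      rw [Real.log_div (by positivity) h.ne', Real.log_mul hc.ne' hk.ne',
        Real.log_div h.ne' hk.ne']
      ring
    rw [h2] at h1
    have h3 := mul_le_mul_of_nonneg_left h1 hp
    have h4 : p * (c * k / p - 1) = c * k - p := by field_simp
    rw [h4] at h3
    linarith

/-- `Q* = diag((a / (K 1))^{τγ/(1+τγ)}) K` minimizes
`(1/γ) KL(Q ∥ K) + τ KL(Q 1 ∥ a)` over all entrywise-nonnegative `Q`. -/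
theorem stmt19 {n r : ℕ} (K : Matrix (Fin n) (Fin r) ℝ) (hK : ∀ i j, 0 < K i j)
    (a : Fin n → ℝ) (ha : ∀ i, 0 < a i) (γ τ : ℝ) (hγ : 0 < γ) (hτ : 0 < τ) :
    ∀ Q : Matrix (Fin n) (Fin r) ℝ, (∀ i j, 0 ≤ Q i j) →
      (1 / γ) * matKL (Matrix.diagonal
          (fun i => (a i / ∑ j, K i j) ^ (τ * γ / (1 + τ * γ))) * K) K
        + τ * vecKL ((Matrix.diagonal
            (fun i => (a i / ∑ j, K i j) ^ (τ * γ / (1 + τ * γ))) * K) *ᵥ (fun _ => 1)) a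
      ≤ (1 / γ) * matKL Q K + τ * vecKL (Q *ᵥ (fun _ => 1)) a := by
  intro Q hQ
  rcases Nat.eq_zero_or_pos r with hr | hr
  · subst hr
    simp [matKL, vecKL, Matrix.mulVec, dotProduct]
  haveI : Nonempty (Fin r) := ⟨⟨0, hr⟩⟩
  simp only [matKL, vecKL, Finset.mul_sum, ← Finset.sum_add_distrib]
  simp only [← Finset.mul_sum]
  apply Finset.sum_le_sum
  intro i _
  simp only [Matrix.mulVec, dotProduct, mul_one, Matrix.diagonal_mul]
  have hS : 0 < ∑ j, K i j := Finset.sum_pos (fun j _ => hK i j) Finset.univ_nonempty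
  have hai := ha i
  rw [← Finset.mul_sum]
  set S := ∑ j, K i j with hSdef
  set θ := τ * γ / (1 + τ * γ) with hθ
  set u := (a i / S) ^ θ with hu
  have hupos : 0 < u := Real.rpow_pos_of_pos (div_pos hai hS) _
  have hlogu : Real.log u = θ * Real.log (a i / S) := Real.log_rpow (div_pos hai hS) _
  have hlog2 : Real.log (u * S / a i) = Real.log u - Real.log (a i / S) := by
    rw [Real.log_div (by positivity) hai.ne', Real.log_mul hupos.ne' hS.ne',
      Real.log_div hai.ne' hS.ne']
    ring
  have hcoef : (1 / γ) * Real.log u + τ * Real.log (u * S / a i) = 0 := by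
    rw [hlog2, hlogu, hθ]
    have : 1 + τ * γ ≠ 0 := by positivity
    field_simp
    ring
  have hP : 0 ≤ ∑ j, Q i j := Finset.sum_nonneg (fun j _ => hQ i j)
  have hA : (∑ j, Q i j) * Real.log u + S - u * S ≤
      ∑ j, (Q i j * Real.log (Q i j / K i j) - Q i j + K i j) := by
    have := Finset.sum_le_sum (s := Finset.univ)
      (fun j _ => kl_tangent (Q i j) (K i j) u (hQ i j) (hK i j) hupos)
    rwa [Finset.sum_sub_distrib, Finset.sum_add_distrib, ← Finset.sum_mul,
      ← Finset.mul_sum] at this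
  have hB := kl_tangent (∑ j, Q i j) (a i) (u * S / a i) hP hai (by positivity)
  rw [div_mul_cancel₀ _ hai.ne'] at hB
  have hL : ∑ j, (u * K i j * Real.log (u * K i j / K i j) - u * K i j + K i j)
      = u * S * Real.log u - u * S + S := by
    have : ∀ j, u * K i j * Real.log (u * K i j / K i j) - u * K i j + K i j
        = K i j * (u * Real.log u - u + 1) := by
      intro j
      rw [mul_div_cancel_right₀ _ (hK i j).ne']
      ring
    simp only [this]
    rw [← Finset.sum_mul, ← hSdef]
    ring
  rw [hL]
  have hA' := mul_le_mul_of_nonneg_left hA (show 0 ≤ 1 / γ by positivity)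
  have hB' := mul_le_mul_of_nonneg_left hB hτ.le
  refine le_trans (le_of_eq ?_) (add_le_add hA' hB')
  linear_combination (u * S - ∑ j, Q i j) * hcoef
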